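/- arXiv:1508.02226 — 3 statements merged into one kernel-verified Lean document; each statement's English description precedes it below -/
import Mathlib

section
/- Let a and b be non-negative integers such that a·x⃗ + b·y⃗ = f⃗ holds in L₀. Then (a, b) is one of (p₁/2, p₂/2), (0, p₂), or (p₁, 0). (In other words, the only monomials in x, y of degree f⃗ in L₀ are x^{p₁/2}y^{p₂/2}, y^{p₂} and x^{p₁}.) -/
/-!
Write `p₁ = 2m` and `p₂ = 2n`. Lifting the equality in `L₀` to the free group expresses
`a • x + b • y - f` as an integer combination of the relations, with coefficients
`c₁, c₂, c₃, c₄`. Comparing `z`-coordinates gives `c₃ = 0` since `q ≠ 0`, and the `f`-coordinate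
gives `c₁ + c₂ = 1`. With `s = 2c₁ + c₄`, the `x`- and `y`-coordinates become `a = m s` and
`b = n (2 - s)`, so non-negativity forces `s ∈ {0, 1, 2}`, which are the three listed cases.
-/

noncomputable section

/-- The free abelian group ℤx⃗ ⊕ ℤy⃗ ⊕ ℤz⃗ ⊕ ℤf⃗, with basis vectors `gen 0 = x⃗`,
`gen 1 = y⃗`, `gen 2 = z⃗`, `gen 3 = f⃗`. -/
abbrev FreeL := Fin 4 → ℤ

/-- The basis vectors x⃗, y⃗, z⃗, f⃗. -/
def gen (i : Fin 4) : FreeL := Pi.single i 1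

/-- The subgroup of relations: `p₁·x⃗ − f⃗`, `p₂·y⃗ − f⃗`, `y⃗ + q·z⃗ − f⃗` and
`(p₁/2)·x⃗ − (p₂/2)·y⃗` (for the type IIB polynomial `x^{p₁} + y^{p₂} + y*z^q`
with the index-2 extension of the grading). -/
def rels (p₁ p₂ q : ℕ) : Submodule ℤ FreeL :=
  Submodule.span ℤ
    {(p₁ : ℤ) • gen 0 - gen 3,
     (p₂ : ℤ) • gen 1 - gen 3,
     gen 1 + (q : ℤ) • gen 2 - gen 3,
     ((p₁ / 2 : ℕ) : ℤ) • gen 0 - ((p₂ / 2 : ℕ) : ℤ) • gen 1}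

/-- The grading group L₀, the quotient of ℤx⃗ ⊕ ℤy⃗ ⊕ ℤz⃗ ⊕ ℤf⃗ by the relations. -/
abbrev L0 (p₁ p₂ q : ℕ) := FreeL ⧸ rels p₁ p₂ q

/-- The class of an element of the free group in L₀. -/
def cls (p₁ p₂ q : ℕ) (v : FreeL) : L0 p₁ p₂ q := Submodule.Quotient.mk v

/-- If `a·x⃗ + b·y⃗ = f⃗` holds in L₀ for non-negative integers `a, b`, then
`(a, b)` is one of `(p₁/2, p₂/2)`, `(0, p₂)`, `(p₁, 0)`; i.e. the only monomials
in `x, y` of degree f⃗ are `x^(p₁/2) * y^(p₂/2)`, `y^p₂` and `x^p₁`. -/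
theorem monomials_xy_of_degree_f (p₁ p₂ q : ℕ)
    (he₁ : Even p₁) (he₂ : Even p₂) (hp₁ : 2 ≤ p₁) (hp₂ : 2 ≤ p₂) (hq : 1 ≤ q)
    (a b : ℕ)
    (h : cls p₁ p₂ q ((a : ℤ) • gen 0 + (b : ℤ) • gen 1) = cls p₁ p₂ q (gen 3)) :
    (a = p₁ / 2 ∧ b = p₂ / 2) ∨ (a = 0 ∧ b = p₂) ∨ (a = p₁ ∧ b = 0) := by
  -- The coefficients of the four relations in an expression of `a • x + b • y - f`.
  obtain ⟨c₁, c₂, c₃, c₄, hc⟩ : ∃ c₁ c₂ c₃ c₄ : ℤ,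
      c₁ • ((p₁ : ℤ) • gen 0 - gen 3) + (c₂ • ((p₂ : ℤ) • gen 1 - gen 3) +
        (c₃ • (gen 1 + (q : ℤ) • gen 2 - gen 3) +
          c₄ • (((p₁ / 2 : ℕ) : ℤ) • gen 0 - ((p₂ / 2 : ℕ) : ℤ) • gen 1))) =
      (a : ℤ) • gen 0 + (b : ℤ) • gen 1 - gen 3 := by
    have hmem := (Submodule.Quotient.eq (rels p₁ p₂ q)).1 h
    rw [rels, Submodule.mem_span_insert] at hmem
    obtain ⟨c₁, u, hu, e₁⟩ := hmem
    rw [Submodule.mem_span_insert] at hu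
    obtain ⟨c₂, v, hv, e₂⟩ := hu
    obtain ⟨c₃, c₄, e₃⟩ := Submodule.mem_span_pair.1 hv
    exact ⟨c₁, c₂, c₃, c₄, by rw [e₃, ← e₂, ← e₁]⟩
  obtain ⟨m, rfl⟩ := he₁
  obtain ⟨n, rfl⟩ := he₂
  have hm : (m + m) / 2 = m := by omega
  have hn : (n + n) / 2 = n := by omega
  rw [hm, hn] at hc ⊢
  have hx := congrFun hc 0
  have hy := congrFun hc 1
  have hz := congrFun hc 2
  have hf := congrFun hc 3
  simp [gen] at hx hy hz hf
  have h₃ : c₃ = 0 := by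
    rcases hz with hz | hz
    · exact hz
    · omega
  subst h₃
  have hm0 : (0 : ℤ) < m := by omega
  have hn0 : (0 : ℤ) < n := by omega
  have hc₂ : c₂ = 1 - c₁ := by linarith
  subst hc₂
  have ha : (a : ℤ) = m * (2 * c₁ + c₄) := by linarith
  have hb : (b : ℤ) = n * (2 - (2 * c₁ + c₄)) := by linarith
  generalize 2 * c₁ + c₄ = s at ha hb
  have hs0 : 0 ≤ s := nonneg_of_mul_nonneg_right (by omega : 0 ≤ (m : ℤ) * s) hm0
  have hs2 : 0 ≤ 2 - s := nonneg_of_mul_nonneg_right (by omega : 0 ≤ (n : ℤ) * (2 - s)) hn0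
  have hs2' : s ≤ 2 := by linarith
  interval_cases s <;> omega
end
end

section
/- Let a and c be non-negative integers such that a·x⃗ + c·z⃗ = f⃗ holds in L₀. Then either (a, c) = (p₁, 0), or p₂ = 2 and (a, c) is one of (p₁/2, q) or (0, 2q). (In other words, a monomial x^{a}z^{c} with c > 0 can have degree f⃗ in L₀ only if p₂ = 2, in which case the only such monomials are x^{p₁/2}z^{p₃/2} and z^{p₃}.) -/
/-!
Write `p₁ = 2P` and `p₂ = 2R`. If `α, β, γ, δ` are the coefficients of the four relations in
`a·x⃗ + c·z⃗ - f⃗`, put `m = 2α + δ` and `k = δ - 2β`. Comparing coordinates gives `a = P * m`,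
`c = γ * q` and `γ = R * k`, and `α + β + γ = 1` becomes `m = 2 - k * (2R - 1)`. Nonnegativity of
`a` and `c` forces `m, k ≥ 0`, so `k * (2R - 1) ≤ 2`: either `k = 0`, or `R = 1` and `k ∈ {1, 2}`.
These are the three listed monomials.
-/

noncomputable section

/-- An equality of degrees in `L₀`, unfolded into integer equations for the coefficients of the
four relations. -/
lemma exists_coeffs (p₁ p₂ q a c : ℕ)
    (h : cls p₁ p₂ q ((a : ℤ) • gen 0 + (c : ℤ) • gen 2) = cls p₁ p₂ q (gen 3)) :
    ∃ α β γ δ : ℤ, α * p₁ + δ * (p₁ / 2 : ℕ) = a ∧ β * p₂ + γ - δ * (p₂ / 2 : ℕ) = 0 ∧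
      γ * q = c ∧ α + β + γ = 1 := by
  have h' := (Submodule.Quotient.eq _).1 h
  simp only [rels, Submodule.mem_span_insert, Submodule.mem_span_singleton] at h'
  obtain ⟨α, _, ⟨β, _, ⟨γ, _, ⟨δ, rfl⟩, rfl⟩, rfl⟩, h'⟩ := h'
  have h0 := congrFun h' 0
  have h1 := congrFun h' 1
  have h2 := congrFun h' 2
  have h3 := congrFun h' 3
  simp [gen, -Nat.cast_ofNat, -Int.natCast_ediv] at h0 h1 h2 h3
  exact ⟨α, β, γ, δ, by linarith, by linarith, by linarith, by linarith⟩

/-- If `a·x⃗ + c·z⃗ = f⃗` holds in L₀ for non-negative integers `a, c`, then either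
`(a, c) = (p₁, 0)`, or `p₂ = 2` and `(a, c)` is one of `(p₁/2, q)`, `(0, 2q)`;
i.e. a monomial `x^a * z^c` with `c > 0` can have degree f⃗ only if `p₂ = 2`, in
which case the only such monomials are `x^(p₁/2) * z^(p₃/2)` and `z^p₃`
(where `p₃ = 2q`). -/
theorem monomials_xz_of_degree_f (p₁ p₂ q : ℕ)
    (he₁ : Even p₁) (he₂ : Even p₂) (hp₁ : 2 ≤ p₁) (hp₂ : 2 ≤ p₂) (hq : 1 ≤ q)
    (a c : ℕ)
    (h : cls p₁ p₂ q ((a : ℤ) • gen 0 + (c : ℤ) • gen 2) = cls p₁ p₂ q (gen 3)) :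
    (a = p₁ ∧ c = 0) ∨ (p₂ = 2 ∧ ((a = p₁ / 2 ∧ c = q) ∨ (a = 0 ∧ c = 2 * q))) := by
  obtain ⟨α, β, γ, δ, h0, h1, h2, h3⟩ := exists_coeffs p₁ p₂ q a c h
  obtain ⟨P, rfl⟩ := he₁
  obtain ⟨R, rfl⟩ := he₂
  rw [show (P + P) / 2 = P by omega] at h0 ⊢
  rw [show (R + R) / 2 = R by omega] at h1
  push_cast at h0 h1
  have hP : (1 : ℤ) ≤ P := by omega
  have hR : (1 : ℤ) ≤ R := by omega
  have hq' : (1 : ℤ) ≤ q := by omega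
  obtain ⟨m, hm⟩ : ∃ m, m = 2 * α + δ := ⟨_, rfl⟩
  obtain ⟨k, hk⟩ : ∃ k, k = δ - 2 * β := ⟨_, rfl⟩
  have ha : (P : ℤ) * m = a := by rw [hm]; linarith
  have hγ : γ = R * k := by rw [hk]; linarith
  have hmk : m = 2 + k - 2 * (R * k) := by rw [← hγ]; linarith
  have hm0 : 0 ≤ m := nonneg_of_mul_nonneg_right (ha ▸ Int.natCast_nonneg a) (by linarith)
  have hγ0 : 0 ≤ γ := nonneg_of_mul_nonneg_left (h2 ▸ Int.natCast_nonneg c) (by linarith)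
  have hk0 : 0 ≤ k := nonneg_of_mul_nonneg_right (hγ ▸ hγ0) (by linarith)
  have hk2 : k ≤ 2 := by nlinarith
  interval_cases k
  · left
    obtain rfl : m = 2 := by linarith
    obtain rfl : γ = 0 := by linarith
    constructor <;> omega
  · right
    obtain rfl : R = 1 := by omega
    obtain rfl : m = 1 := by simpa using hmk
    obtain rfl : γ = 1 := by simpa using hγ
    exact ⟨rfl, Or.inl ⟨by omega, by omega⟩⟩
  · right
    obtain rfl : R = 1 := by omega
    obtain rfl : m = 0 := by simpa using hmk
    obtain rfl : γ = 2 := by simpa using hγ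
    exact ⟨rfl, Or.inr ⟨by omega, by omega⟩⟩
end
end

section
/- Let h = x³ + x²y³ + z² − y⁴z ∈ ℂ[x,y,z] (the equation of the virtual bimodal singularity J_{3,−1}). Then the set of critical points of h in ℂ³, i.e. the common zero set of ∂h/∂x = 3x² + 2xy³, ∂h/∂y = 3x²y² − 4y³z and ∂h/∂z = 2z − y⁴, consists of exactly the two points (0, 0, 0) and (−9/4, 3/2, 81/32); moreover, the Hessian matrix of h at the point (−9/4, 3/2, 81/32) is invertible (its determinant equals −19683/64), so this additional critical point is non-degenerate, i.e. of type A₁. -/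
open MvPolynomial

noncomputable section

/-- The polynomial `h = x³ + x²y³ + z² − y⁴z` defining the virtual bimodal
singularity `J_{3,−1}` (variables `X 0 = x`, `X 1 = y`, `X 2 = z`). -/
def hJ : MvPolynomial (Fin 3) ℂ :=
  X 0 ^ 3 + X 0 ^ 2 * X 1 ^ 3 + X 2 ^ 2 - X 1 ^ 4 * X 2

/-- The additional critical point `(−9/4, 3/2, 81/32)` of `h`. -/
def ptJ : Fin 3 → ℂ := ![-(9 / 4), 3 / 2, 81 / 32]

/-- The Hessian matrix of `h` at a point `p`, the matrix of second partial
derivatives of `h` evaluated at `p`. -/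
def hessJ (p : Fin 3 → ℂ) : Matrix (Fin 3) (Fin 3) ℂ :=
  Matrix.of fun i j => MvPolynomial.eval p (MvPolynomial.pderiv i (MvPolynomial.pderiv j hJ))

/-!
On the critical locus `z = y⁴ / 2` and `x (3x + 2y³) = 0`, and the middle equation becomes
`3x²y² = 2y⁷`. If `x = 0` this forces `y = 0`; if `x = -2y³/3` it reads `y⁷ (4y/3 - 2) = 0`, so
`y = 0` or `y = 3/2`. The Hessian determinant is a direct evaluation of the second partials.
-/

lemma eval_pderiv_zero_hJ (p : Fin 3 → ℂ) :
    eval p (pderiv 0 hJ) = 3 * p 0 ^ 2 + 2 * p 0 * p 1 ^ 3 := by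
  simp [hJ, pderiv_X]
  ring

lemma eval_pderiv_one_hJ (p : Fin 3 → ℂ) :
    eval p (pderiv 1 hJ) = 3 * p 0 ^ 2 * p 1 ^ 2 - 4 * p 1 ^ 3 * p 2 := by
  simp [hJ, pderiv_X]
  ring

lemma eval_pderiv_two_hJ (p : Fin 3 → ℂ) :
    eval p (pderiv 2 hJ) = 2 * p 2 - p 1 ^ 4 := by
  simp [hJ, pderiv_X]

lemma critical_system_iff (x y z : ℂ) :
    (3 * x ^ 2 + 2 * x * y ^ 3 = 0 ∧ 3 * x ^ 2 * y ^ 2 - 4 * y ^ 3 * z = 0 ∧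
        2 * z - y ^ 4 = 0) ↔
      (x = 0 ∧ y = 0 ∧ z = 0) ∨ (x = -(9 / 4) ∧ y = 3 / 2 ∧ z = 81 / 32) := by
  constructor
  · rintro ⟨h0, h1, h2⟩
    have hz : z = y ^ 4 / 2 := by linear_combination h2 / 2
    subst hz
    have hx : x * (3 * x + 2 * y ^ 3) = 0 := by linear_combination h0
    rcases mul_eq_zero.mp hx with rfl | hx
    · have hy : y ^ 7 = 0 := by linear_combination -h1 / 2
      have hy : y = 0 := by simpa using hy
      subst hy
      simp
    · have hx : x = -(2 / 3) * y ^ 3 := by linear_combination hx / 3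
      subst hx
      have hy : y ^ 7 * (y - 3 / 2) = 0 := by linear_combination 3 / 4 * h1
      rcases mul_eq_zero.mp hy with hy | hy
      · have hy : y = 0 := by simpa using hy
        subst hy
        simp
      · have hy : y = 3 / 2 := by linear_combination hy
        subst hy
        norm_num
  · rintro (⟨rfl, rfl, rfl⟩ | ⟨rfl, rfl, rfl⟩) <;> norm_num

lemma hessJ_eq (p : Fin 3 → ℂ) :
    hessJ p = !![6 * p 0 + 2 * p 1 ^ 3, 6 * p 0 * p 1 ^ 2, 0;
      6 * p 0 * p 1 ^ 2, 6 * p 0 ^ 2 * p 1 - 12 * p 1 ^ 2 * p 2, -4 * p 1 ^ 3;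
      0, -4 * p 1 ^ 3, 2] := by
  have hn (k : Fin 3) (n : ℕ) [n.AtLeastTwo] :
      pderiv k (OfNat.ofNat n : MvPolynomial (Fin 3) ℂ) = 0 :=
    Derivation.map_natCast _ n
  ext i j
  fin_cases i <;> fin_cases j <;>
    simp [hessJ, hJ, pderiv_X, hn] <;> ring

/-- The set of critical points of `h = x³ + x²y³ + z² − y⁴z` in ℂ³, i.e. the
common zero set of `∂h/∂x = 3x² + 2xy³`, `∂h/∂y = 3x²y² − 4y³z` and
`∂h/∂z = 2z − y⁴`, consists exactly of the two points `(0,0,0)` and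
`(−9/4, 3/2, 81/32)`; moreover, the Hessian matrix of `h` at `(−9/4, 3/2, 81/32)`
is invertible, with determinant `−19683/64`, so this additional critical point
is non-degenerate, i.e. of type `A₁`. -/
theorem critical_points_J3neg1 :
    {p : Fin 3 → ℂ | ∀ k, MvPolynomial.eval p (MvPolynomial.pderiv k hJ) = 0}
        = {0, ptJ} ∧
      (hessJ ptJ).det = -(19683 / 64) ∧ IsUnit (hessJ ptJ).det := by
  have hdet : (hessJ ptJ).det = -(19683 / 64) := by
    rw [hessJ_eq, Matrix.det_fin_three]
    simp [ptJ]
    norm_num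
  refine ⟨?_, hdet, ?_⟩
  · ext p
    simp only [Set.mem_ofPred_eq, Set.mem_insert_iff, Set.mem_singleton_iff, Fin.forall_fin_succ,
      funext_iff]
    have h := critical_system_iff (p 0) (p 1) (p 2)
    rw [← eval_pderiv_zero_hJ, ← eval_pderiv_one_hJ, ← eval_pderiv_two_hJ] at h
    simpa [ptJ] using h
  · rw [hdet, isUnit_iff_ne_zero]
    norm_num
end
end
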